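/- Let M be a continuous von Neumann algebra and p ∈ M a projection. Then every triple homomorphism from the JC*-triple pM into ℂ is identically zero; that is, pM does not admit a nonzero triple homomorphism onto ℂ. -/

import Mathlib

open ContinuousLinearMap

noncomputable section

variable {H : Type} [NormedAddCommGroup H] [InnerProductSpace ℂ H] [CompleteSpace H]

/-- The ternary product `x y* z` of bounded operators. -/
def tri (x y z : H →L[ℂ] H) : H →L[ℂ] H := x ∘L (adjoint y) ∘L z

/-- The Jordan triple product `{x,y,z} = (x y* z + z y* x)/2`. -/
def jtri (x y z : H →L[ℂ] H) : H →L[ℂ] H := (2 : ℂ)⁻¹ • (tri x y z + tri z y x)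

/-- A projection in `B(H)`. -/
def IsProjection (p : H →L[ℂ] H) : Prop := IsSelfAdjoint p ∧ p * p = p

/-- A von Neumann algebra is continuous if it contains no nonzero abelian projection,
i.e. no nonzero projection `q` with `qMq` commutative. -/
def IsContinuousVNA (M : VonNeumannAlgebra H) : Prop :=
  ∀ q : H →L[ℂ] H, q ∈ M → IsProjection q →
    (∀ x ∈ M, ∀ y ∈ M, (q * x * q) * (q * y * q) = (q * y * q) * (q * x * q)) → q = 0

/-- The JC*-triple `pM = {p x : x ∈ M}` associated to a projection `p` in a
von Neumann algebra `M`. -/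
def corner (M : VonNeumannAlgebra H) (p : H →L[ℂ] H) : Submodule ℂ (H →L[ℂ] H) :=
  (Subalgebra.toSubmodule M.toStarSubalgebra.toSubalgebra).map (LinearMap.mulLeft ℂ p)

/-!
Let `e` and `g` be projections with `2ege = e`, `2geg = g` and supremum `p = 2(e - g)²`. Then
`s = 2e - p` and `t = 2g - p` satisfy `s² = t² = p` and `st + ts = 0`. A triple homomorphism `f`
sends `{s,p,t} = 0`, `{s,p,s} = p` and `{t,p,t} = p` to `f(s) conj(f(p)) f(t)`,
`f(s) conj(f(p)) f(s)` and `f(t) conj(f(p)) f(t)`, so `f(p) = 0`. Evaluating `f` on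
`{p,p,x} = (x + xp)/2` first for `x` in `pMp` and then for all `x` in `pM` gives `f = 0`.

Such a pair exists by exhaustion: below every nonzero projection `q ≤ p` there is a nonzero pair.
Indeed, `qMq` is not commutative, and a C*-algebra without nonzero elements of square zero is
commutative: cutting a positive element into spectral pieces of width `‖a‖ / 2ⁿ` makes the
commutators of the pieces with a self-adjoint `b` mutually orthogonal, whence
`‖[a, b]‖ ≤ 2¹⁻ⁿ ‖a‖ ‖b‖`. If `x ≠ 0` lies in `qMq` and `x² = 0`, the range projections of `x` and
of the positive part of `x + x*` form a pair.
-/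

section SquareZeroFree

theorem mul_mul_eq_smul_of_mul_eq_smul {R A : Type*} [Semiring R] [NonUnitalRing A] [Module R A]
    [IsScalarTower R A A] [SMulCommClass R A A] (hA : ∀ x : A, x * x = 0 → x = 0)
    {a b : A} {d : R} (hba : b * a = d • a) (y : A) : a * y * b = d • (a * y) := by
  refine (sub_eq_zero.mp (hA (d • (a * y) - a * y * b) ?_)).symm
  have key : a * y * b * a = d • (a * y * a) := by rw [mul_assoc, hba, mul_smul_comm]
  simp only [sub_mul, mul_sub, smul_mul_assoc, mul_smul_comm, ← mul_assoc, key, sub_self, zero_mul,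
    smul_zero]

theorem commutator_mul_commutator_eq_zero {R A : Type*} [Semiring R] [NonUnitalRing A]
    [Module R A] [IsScalarTower R A A] [SMulCommClass R A A] (hA : ∀ x : A, x * x = 0 → x = 0)
    {a b : A} {d : R} (hab : a * b = d • a) (hba : b * a = d • a) (y : A) :
    (a * y - y * a) * (b * y - y * b) = 0 := by
  have hy : a * y * b = d • (a * y) := mul_mul_eq_smul_of_mul_eq_smul hA hba y
  have hyy : a * y * y * b = d • (a * y * y) := by
    simpa only [mul_assoc] using mul_mul_eq_smul_of_mul_eq_smul hA hba (y * y)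
  have hyab : y * a * b = d • (y * a) := by rw [mul_assoc, hab, mul_smul_comm]
  have hyayb : y * a * y * b = d • (y * a * y) := by
    rw [mul_assoc y a y, mul_assoc y, hy, mul_smul_comm]
  simp only [sub_mul, mul_sub, ← mul_assoc, hy, hyy, hyab, hyayb, smul_mul_assoc]
  abel

variable {A : Type*} [NonUnitalCStarAlgebra A]

theorem isStarNormal_commutator {a b : A} (ha : IsSelfAdjoint a) (hb : IsSelfAdjoint b) :
    IsStarNormal (a * b - b * a) where
  star_comm_self := by
    have hstar : star (a * b - b * a) = -(a * b - b * a) := by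
      simp only [star_sub, star_mul, ha.star_eq, hb.star_eq, neg_sub]
    rw [hstar]
    exact (Commute.refl _).neg_left

theorem norm_commutator_add_eq_max (hA : ∀ x : A, x * x = 0 → x = 0) {b c y : A} {d : ℝ}
    (hb : IsSelfAdjoint b) (hc : IsSelfAdjoint c) (hy : IsSelfAdjoint y)
    (hbc : b * c = d • b) (hcb : c * b = d • b) :
    ‖(b + c) * y - y * (b + c)‖ = max ‖b * y - y * b‖ ‖c * y - y * c‖ := by
  have hzero := commutator_mul_commutator_eq_zero hA hbc hcb y
  have hzero' : (c * y - y * c) * (b * y - y * b) = 0 := by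
    have := congrArg star hzero
    simp only [star_mul, star_sub, hb.star_eq, hc.star_eq, hy.star_eq, star_zero] at this
    rwa [← neg_mul_neg, neg_sub, neg_sub]
  rw [← IsStarNormal.norm_add_eq_max (isStarNormal_commutator hb hy)
    (isStarNormal_commutator hc hy) (hzero.trans hzero'.symm) hzero]
  congr 1
  rw [add_mul, mul_add]
  abel

section Order

variable [PartialOrder A] [StarOrderedRing A]

theorem exists_nonneg_add_eq_of_norm_le {a : A} (ha : 0 ≤ a) {d : ℝ} (had : ‖a‖ ≤ d + d) :
    ∃ b c : A, 0 ≤ b ∧ 0 ≤ c ∧ ‖b‖ ≤ d ∧ ‖c‖ ≤ d ∧ a = b + c ∧ b * c = d • b ∧ c * b = d • b := by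
  have hd : 0 ≤ d := by linarith [norm_nonneg a]
  have hnonneg : ∀ x ∈ quasispectrum ℝ a, 0 ≤ x := quasispectrum_nonneg_of_nonneg a ha
  have hle : ∀ x ∈ quasispectrum ℝ a, x ≤ d + d := fun x hx ↦
    (le_abs_self x).trans
      ((NonUnitalIsometricContinuousFunctionalCalculus.norm_quasispectrum_le a hx).trans had)
  have hmul : cfcₙ (fun x : ℝ ↦ max (x - d) 0) a * cfcₙ (fun x ↦ min x d) a =
      d • cfcₙ (fun x ↦ max (x - d) 0) a := by
    rw [← cfcₙ_mul _ _ a, ← cfcₙ_const_mul d _ a]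
    refine cfcₙ_congr fun x _ ↦ ?_
    rcases le_total x d with hx | hx
    · simp [hx]
    · simp [hx, mul_comm]
  refine ⟨_, _, cfcₙ_nonneg fun x _ ↦ le_max_right (x - d) 0,
    cfcₙ_nonneg fun x hx ↦ le_min (hnonneg x hx) hd,
    norm_cfcₙ_le fun x hx ↦ ?_, norm_cfcₙ_le fun x hx ↦ ?_, ?_, hmul,
    (cfcₙ_commute_cfcₙ _ _ a).eq.symm.trans hmul⟩
  · rw [Real.norm_of_nonneg (le_max_right _ _)]
    exact max_le (by linarith [hle x hx]) hd
  · rw [Real.norm_of_nonneg (le_min (hnonneg x hx) hd)]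
    exact min_le_right x d
  · rw [← cfcₙ_add (a := a) _ _]
    conv_lhs => rw [← cfcₙ_id' ℝ a]
    refine cfcₙ_congr fun x _ ↦ ?_
    rcases le_total x d with hx | hx <;> simp [hx]

theorem two_pow_mul_norm_commutator_le (hA : ∀ x : A, x * x = 0 → x = 0) {b : A}
    (hb : IsSelfAdjoint b) (n : ℕ) :
    ∀ {a : A} {d : ℝ}, 0 ≤ a → ‖a‖ ≤ d → 2 ^ n * ‖a * b - b * a‖ ≤ 2 * d * ‖b‖ := by
  induction n with
  | zero =>
    intro a d _ had
    calc 2 ^ 0 * ‖a * b - b * a‖ ≤ ‖a‖ * ‖b‖ + ‖b‖ * ‖a‖ := by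
          rw [pow_zero, one_mul]
          exact (norm_sub_le _ _).trans (add_le_add (norm_mul_le a b) (norm_mul_le b a))
      _ = 2 * ‖a‖ * ‖b‖ := by ring
      _ ≤ 2 * d * ‖b‖ := by gcongr
  | succ n ih =>
    intro a d ha had
    obtain ⟨x, y, hx, hy, hxd, hyd, rfl, hxy, hyx⟩ :=
      exists_nonneg_add_eq_of_norm_le ha (had.trans_eq (add_halves d).symm)
    rw [norm_commutator_add_eq_max hA (.of_nonneg hx) (.of_nonneg hy) hb hxy hyx, pow_succ]
    rcases max_cases ‖x * b - b * x‖ ‖y * b - b * y‖ with ⟨hmax, -⟩ | ⟨hmax, -⟩ <;> rw [hmax]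
    · linarith [ih hx hxd]
    · linarith [ih hy hyd]

theorem commute_of_nonneg_of_isSelfAdjoint (hA : ∀ x : A, x * x = 0 → x = 0) {a b : A}
    (ha : 0 ≤ a) (hb : IsSelfAdjoint b) : Commute a b := by
  by_contra hab
  have hpos : 0 < ‖a * b - b * a‖ := norm_pos_iff.mpr (sub_ne_zero.mpr hab)
  obtain ⟨n, hn⟩ := pow_unbounded_of_one_lt (2 * ‖a‖ * ‖b‖ / ‖a * b - b * a‖) one_lt_two
  exact ((div_lt_iff₀ hpos).mp hn).not_ge (two_pow_mul_norm_commutator_le hA hb n ha le_rfl)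

end Order

theorem commute_of_forall_mul_self_eq_zero (hA : ∀ x : A, x * x = 0 → x = 0) (a b : A) :
    Commute a b := by
  let := CStarAlgebra.spectralOrder A
  have := CStarAlgebra.spectralOrderedRing A
  have mem_span (x : A) : x ∈ Submodule.span ℂ {x : A | 0 ≤ x} :=
    CStarAlgebra.span_nonneg (A := A) ▸ Submodule.mem_top
  have commute_of_nonneg {y : A} (hy : 0 ≤ y) (x : A) : Commute x y :=
    Submodule.span_induction
      (fun _ hx ↦ commute_of_nonneg_of_isSelfAdjoint hA hx (.of_nonneg hy)) (.zero_left y)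
      (fun _ _ _ _ h₁ h₂ ↦ h₁.add_left h₂) (fun c _ _ h ↦ h.smul_left c) (mem_span x)
  exact Submodule.span_induction (fun _ hy ↦ commute_of_nonneg hy a) (.zero_right a)
    (fun _ _ _ _ h₁ h₂ ↦ h₁.add_right h₂) (fun c _ _ h ↦ h.smul_right c) (mem_span b)

end SquareZeroFree

section RangeProjection

variable {𝕜 K : Type*} [RCLike 𝕜] [NormedAddCommGroup K] [InnerProductSpace 𝕜 K] [CompleteSpace K]

/-- The orthogonal projection onto the closed linear span of the ranges of the operators in `X`.
For a singleton it is the range projection of that operator, and for a set of projections their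
supremum. -/
def rangeProj (X : Set (K →L[𝕜] K)) : K →L[𝕜] K :=
  (⨆ x ∈ X, x.range).topologicalClosure.starProjection

variable {X : Set (K →L[𝕜] K)} {x y : K →L[𝕜] K}

theorem isStarProjection_rangeProj (X : Set (K →L[𝕜] K)) : IsStarProjection (rangeProj X) :=
  isStarProjection_starProjection

theorem rangeProj_mul_of_mem (hx : x ∈ X) : rangeProj X * x = x := by
  ext v
  exact Submodule.starProjection_eq_self_iff.mpr <| Submodule.le_topologicalClosure _ <|
    le_iSup₂_of_le (f := fun (x : K →L[𝕜] K) (_ : x ∈ X) ↦ x.range) x hx le_rfl ⟨v, rfl⟩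

theorem range_rangeProj_le {S : Submodule 𝕜 K} (hS : IsClosed (S : Set K))
    (hX : ∀ x ∈ X, x.range ≤ S) : (rangeProj X).range ≤ S := by
  rw [rangeProj, Submodule.range_starProjection]
  exact Submodule.topologicalClosure_minimal _ (iSup₂_le hX) hS

theorem mul_rangeProj_congr {z : K →L[𝕜] K} (h : ∀ x ∈ X, y * x = z * x) :
    y * rangeProj X = z * rangeProj X := by
  have hle : (rangeProj X).range ≤ (y - z).ker := by
    refine range_rangeProj_le (y - z).isClosed_ker fun x hx ↦ ?_
    rintro _ ⟨v, rfl⟩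
    exact sub_eq_zero.mpr (congrArg (· v) (h x hx))
  ext v
  exact sub_eq_zero.mp (hle ⟨v, rfl⟩)

theorem mul_rangeProj_eq_zero (h : ∀ x ∈ X, y * x = 0) : y * rangeProj X = 0 :=
  (mul_rangeProj_congr fun x hx ↦ (h x hx).trans (zero_mul x).symm).trans (zero_mul _)

theorem mul_rangeProj_eq_rangeProj (h : ∀ x ∈ X, y * x = x) :
    y * rangeProj X = rangeProj X :=
  (mul_rangeProj_congr fun x hx ↦ (h x hx).trans (one_mul x).symm).trans (one_mul _)

theorem rangeProj_mem {L : Type*} [NormedAddCommGroup L] [InnerProductSpace ℂ L] [CompleteSpace L]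
    {M : VonNeumannAlgebra L} {X : Set (L →L[ℂ] L)} (hX : ∀ x ∈ X, x ∈ M) : rangeProj X ∈ M := by
  rw [VonNeumannAlgebra.IsStarProjection.mem_iff (isStarProjection_rangeProj X)]
  intro y hy
  rw [Module.End.mem_invtSubmodule]
  have hcomm : ∀ x ∈ X, rangeProj X * y * x = y * x := fun x hx ↦ by
    rw [mul_assoc, ← VonNeumannAlgebra.mem_commutant_iff.mp hy x (hX x hx), ← mul_assoc,
      rangeProj_mul_of_mem hx]
  rintro _ ⟨v, rfl⟩
  exact ⟨y (rangeProj X v), congrArg (· v) (mul_rangeProj_congr hcomm)⟩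

end RangeProjection

section Isoclinic

theorem mul_eq_zero_symm_of_isSelfAdjoint {R : Type*} [NonUnitalSemiring R] [StarRing R] {a b : R}
    (ha : IsSelfAdjoint a) (hb : IsSelfAdjoint b) (hab : a * b = 0) : b * a = 0 := by
  simpa only [star_mul, ha.star_eq, hb.star_eq, star_zero] using congrArg star hab

/-- Two projections whose ranges meet at the constant angle `π / 4`: compressing either of them
to the range of the other gives half of the latter. -/
structure IsIsoclinicPair {R : Type*} [Ring R] [Star R] (e g : R) : Prop where
  isStarProjection_left : IsStarProjection e
  isStarProjection_right : IsStarProjection g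
  two_mul_left : 2 * (e * g * e) = e
  two_mul_right : 2 * (g * e * g) = g

/-- For an isoclinic pair this is the supremum of the two projections. -/
def isoclinicSup {R : Type*} [Ring R] (e g : R) : R := 2 * ((e - g) * (e - g))

theorem isoclinicSup_comm {R : Type*} [Ring R] (e g : R) :
    isoclinicSup e g = isoclinicSup g e := by
  unfold isoclinicSup
  noncomm_ring

theorem isSelfAdjoint_isoclinicSup {R : Type*} [Ring R] [StarRing R] {e g : R}
    (he : IsSelfAdjoint e) (hg : IsSelfAdjoint g) : IsSelfAdjoint (isoclinicSup e g) := by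
  rw [isSelfAdjoint_iff, isoclinicSup, two_mul]
  simp only [star_add, star_mul, (he.sub hg).star_eq]

theorem mul_isoclinicSup_of_mul_eq {R : Type*} [Ring R] {e g q : R} (he : q * e = e)
    (hg : q * g = g) : q * isoclinicSup e g = isoclinicSup e g := by
  unfold isoclinicSup
  linear_combination (norm := noncomm_ring) 2 * he * (e - g) - 2 * hg * (e - g)

namespace IsIsoclinicPair

section Ring

variable {R : Type*} [Ring R] [StarRing R] {e g e' g' : R}

theorem symm (h : IsIsoclinicPair e g) : IsIsoclinicPair g e :=
  ⟨h.isStarProjection_right, h.isStarProjection_left, h.two_mul_right, h.two_mul_left⟩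

theorem isoclinicSup_mul_left (h : IsIsoclinicPair e g) : isoclinicSup e g * e = e := by
  have hee := h.isStarProjection_left.isIdempotentElem.eq
  have hgg := h.isStarProjection_right.isIdempotentElem.eq
  unfold isoclinicSup
  linear_combination (norm := noncomm_ring)
    2 * hee * e + 2 * hee - 2 * g * hee + 2 * hgg * e - h.two_mul_left

theorem isoclinicSup_mul_right (h : IsIsoclinicPair e g) : isoclinicSup e g * g = g :=
  isoclinicSup_comm e g ▸ h.symm.isoclinicSup_mul_left

theorem isStarProjection_isoclinicSup (h : IsIsoclinicPair e g) :
    IsStarProjection (isoclinicSup e g) where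
  isIdempotentElem := mul_isoclinicSup_of_mul_eq h.isoclinicSup_mul_left h.isoclinicSup_mul_right
  isSelfAdjoint := isSelfAdjoint_isoclinicSup h.isStarProjection_left.isSelfAdjoint
    h.isStarProjection_right.isSelfAdjoint

theorem left_mul_isoclinicSup (h : IsIsoclinicPair e g) : e * isoclinicSup e g = e := by
  simpa only [star_mul, h.isStarProjection_isoclinicSup.isSelfAdjoint.star_eq,
    h.isStarProjection_left.isSelfAdjoint.star_eq] using congrArg star h.isoclinicSup_mul_left

theorem left_mul_left_eq_zero (h : IsIsoclinicPair e g) (h' : IsIsoclinicPair e' g')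
    (hsup : isoclinicSup e g * isoclinicSup e' g' = 0) : e * e' = 0 := by
  rw [← h.left_mul_isoclinicSup, ← h'.isoclinicSup_mul_left, mul_assoc, ← mul_assoc _ _ e', hsup,
    zero_mul, mul_zero]

theorem two_mul_left_add (h : IsIsoclinicPair e g) (h' : IsIsoclinicPair e' g')
    (hsup : isoclinicSup e g * isoclinicSup e' g' = 0) :
    2 * ((e + e') * (g + g') * (e + e')) = e + e' := by
  have hsup' := mul_eq_zero_symm_of_isSelfAdjoint h.isStarProjection_isoclinicSup.isSelfAdjoint
    h'.isStarProjection_isoclinicSup.isSelfAdjoint hsup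
  have hge : g * e' = 0 :=
    h.symm.left_mul_left_eq_zero h' (isoclinicSup_comm e g ▸ hsup)
  have heg : e * g' = 0 :=
    h.left_mul_left_eq_zero h'.symm (isoclinicSup_comm e' g' ▸ hsup)
  have hge' : g' * e = 0 :=
    h'.symm.left_mul_left_eq_zero h (isoclinicSup_comm e' g' ▸ hsup')
  have heg' : e' * g = 0 :=
    h'.left_mul_left_eq_zero h.symm (isoclinicSup_comm e g ▸ hsup')
  linear_combination (norm := noncomm_ring) h.two_mul_left + h'.two_mul_left +
    2 * heg * (e + e') + 2 * heg' * (e + e') + 2 * e * hge + 2 * e' * hge'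

theorem add (h : IsIsoclinicPair e g) (h' : IsIsoclinicPair e' g')
    (hsup : isoclinicSup e g * isoclinicSup e' g' = 0) :
    IsIsoclinicPair (e + e') (g + g') where
  isStarProjection_left := h.isStarProjection_left.add h'.isStarProjection_left
    (h.left_mul_left_eq_zero h' hsup)
  isStarProjection_right := h.isStarProjection_right.add h'.isStarProjection_right
    (h.symm.left_mul_left_eq_zero h'.symm
      (isoclinicSup_comm e g ▸ isoclinicSup_comm e' g' ▸ hsup))
  two_mul_left := h.two_mul_left_add h' hsup
  two_mul_right := h.symm.two_mul_left_add h'.symm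
    (isoclinicSup_comm e g ▸ isoclinicSup_comm e' g' ▸ hsup)

end Ring

section CStarAlgebra

variable {A : Type*} [CStarAlgebra A] [PartialOrder A] [StarOrderedRing A] {e g e' g' : A}

theorem left_mul_right_eq_of_le (h : IsIsoclinicPair e g) (h' : IsIsoclinicPair e' g')
    (he : e ≤ e') (hg : g ≤ g') : e' * g = e * g := by
  have hd : IsStarProjection (e' - e) :=
    (h.isStarProjection_left.le_iff_sub h'.isStarProjection_left).mp he
  have hgg' : g * g' = g :=
    (h.isStarProjection_right.le_iff_mul_eq_left h'.isStarProjection_right).mp hg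
  have hg'g : g' * g = g :=
    (h.isStarProjection_right.le_iff_mul_eq_right h'.isStarProjection_right).mp hg
  have hgg : g * g = g := h.isStarProjection_right.isIdempotentElem
  have htwo : (2 : ℂ) • (g * (e' - e) * g) = 0 := by
    rw [two_smul]
    linear_combination (norm := noncomm_ring) g * h'.two_mul_right * g - h.two_mul_right + hgg -
      2 * hgg' * e' * g' * g - 2 * g * e' * hg'g + hgg' * g
  have hzero : star ((e' - e) * g) * ((e' - e) * g) = 0 := by
    rw [star_mul, hd.isSelfAdjoint.star_eq, h.isStarProjection_right.isSelfAdjoint.star_eq,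
      mul_assoc, ← mul_assoc _ _ g, hd.isIdempotentElem.eq, ← mul_assoc]
    exact (smul_eq_zero_iff_right two_ne_zero).mp htwo
  rw [← sub_eq_zero, ← sub_mul]
  exact (CStarRing.star_mul_self_eq_zero_iff _).mp hzero

end CStarAlgebra

end IsIsoclinicPair

end Isoclinic

section SquareZero

section CStarAlgebra

variable {A : Type*} [CStarAlgebra A] [PartialOrder A] [StarOrderedRing A]

theorem conjugate_posPart_eq_negPart {v a : A} (hv : IsSelfAdjoint v) (hvv : v * v = 1)
    (ha : IsSelfAdjoint a) (hva : v * a * v = -a) : v * a⁺ * v = a⁻ := by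
  have hsub : -a = v * a⁺ * v - v * a⁻ * v := by
    rw [← hva, ← sub_mul, ← mul_sub, CFC.posPart_sub_negPart a]
  have hmul : v * a⁺ * v * (v * a⁻ * v) = 0 := by
    linear_combination (norm := noncomm_ring)
      v * a⁺ * hvv * a⁻ * v + v * CFC.posPart_mul_negPart a * v
  rw [← CFC.posPart_neg]
  exact (CFC.posPart_negPart_unique hsub hmul (hv.conjugate_nonneg (CFC.posPart_nonneg a))
    (hv.conjugate_nonneg (CFC.negPart_nonneg a))).1.symm

theorem mul_posPart_eq_posPart {q a : A} (ha : IsSelfAdjoint a) (hqa : q * a = a) :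
    q * a⁺ = a⁺ := by
  have hqa' : (q - 1) * a = 0 := by rw [sub_mul, hqa, one_mul, sub_self]
  have hsq : a⁺ * a⁺ = a * a⁺ := by
    linear_combination (norm := noncomm_ring)
      CFC.posPart_sub_negPart a * a⁺ + CFC.negPart_mul_posPart a
  have hzero : (q - 1) * a⁺ * star ((q - 1) * a⁺) = 0 := by
    rw [star_mul, (CFC.posPart_nonneg a).isSelfAdjoint.star_eq, mul_assoc, ← mul_assoc a⁺, hsq,
      ← mul_assoc, ← mul_assoc, hqa', zero_mul, zero_mul]
  have := (CStarRing.mul_star_self_eq_zero_iff _).mp hzero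
  rwa [sub_mul, one_mul, sub_eq_zero] at this

variable {e g x : A}

theorem reflection_mul_posPart (he : IsStarProjection e) (hex : e * x = x) (hxe : x * e = 0) :
    (2 * e - 1) * (x + star x)⁺ = (x + star x)⁻ * (2 * e - 1) := by
  have hee : e * e = e := he.isIdempotentElem
  have hex' : e * star x = 0 := by
    simpa only [star_mul, he.isSelfAdjoint.star_eq, star_zero] using congrArg star hxe
  have hxe' : star x * e = star x := by
    simpa only [star_mul, he.isSelfAdjoint.star_eq] using congrArg star hex
  have hv : IsSelfAdjoint (2 * e - 1) := by
    rw [two_mul]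
    exact (he.isSelfAdjoint.add he.isSelfAdjoint).sub (.one A)
  have hvv : (2 * e - 1) * (2 * e - 1) = 1 := by
    linear_combination (norm := noncomm_ring) 4 * hee
  have hconj : (2 * e - 1) * (x + star x) * (2 * e - 1) = -(x + star x) := by
    linear_combination (norm := noncomm_ring)
      4 * hex * e + 2 * hxe + 4 * hex' * e + -2 * hex - 2 * hex' - 2 * hxe'
  rw [← conjugate_posPart_eq_negPart hv hvv (.add_star_self x) hconj, mul_assoc _ _ (2 * e - 1),
    hvv, mul_one]

theorem two_mul_mul_posPart_mul_one_sub (he : IsStarProjection e) (hex : e * x = x)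
    (hxe : x * e = 0) : 2 * (e * (x + star x)⁺ * (1 - e)) = x := by
  have hee : e * e = e := he.isIdempotentElem
  have hxe' : star x * e = star x := by
    simpa only [star_mul, he.isSelfAdjoint.star_eq] using congrArg star hex
  have hsub := CFC.posPart_sub_negPart (x + star x)
  linear_combination (norm := noncomm_ring) reflection_mul_posPart he hex hxe * (1 - e) +
    hsub * (1 - e) - hxe - hxe' - 2 * (x + star x)⁻ * hee

theorem two_mul_conjugate_mul_eq (he : IsStarProjection e) (hex : e * x = x) (hxe : x * e = 0)
    (hgpos : g * (x + star x)⁺ = (x + star x)⁺) (hgneg : g * (x + star x)⁻ = 0) :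
    2 * (e * g * e) * x = x := by
  have hxe' : star x * e = star x := by
    simpa only [star_mul, he.isSelfAdjoint.star_eq] using congrArg star hex
  have hgx : g * x = (x + star x)⁺ * (1 - e) := by
    have hsub := CFC.posPart_sub_negPart (x + star x)
    linear_combination (norm := noncomm_ring)
      g * hxe + g * hxe' - g * hsub * (1 - e) + hgpos * (1 - e) - hgneg * (1 - e)
  linear_combination (norm := noncomm_ring)
    2 * e * g * hex + 2 * e * hgx + two_mul_mul_posPart_mul_one_sub he hex hxe

end CStarAlgebra

variable {K : Type*} [NormedAddCommGroup K] [InnerProductSpace ℂ K] [CompleteSpace K]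

theorem posPart_mem_vonNeumannAlgebra {M : VonNeumannAlgebra K} {a : K →L[ℂ] K} (ha : a ∈ M) :
    a⁺ ∈ M := by
  rw [← M.commutant_commutant, VonNeumannAlgebra.mem_commutant_iff] at ha ⊢
  intro y hy
  exact (((show Commute y a from ha y hy).symm.cfcₙ_real _).symm).eq

theorem isIsoclinicPair_rangeProj {x : K →L[ℂ] K} (hx : x * x = 0) :
    IsIsoclinicPair (rangeProj {x}) (rangeProj {(x + star x)⁺}) := by
  set e := rangeProj {x}
  set a := x + star x
  set g := rangeProj {a⁺}
  have he : IsStarProjection e := isStarProjection_rangeProj _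
  have hg : IsStarProjection g := isStarProjection_rangeProj _
  have hex : e * x = x := rangeProj_mul_of_mem (Set.mem_singleton x)
  have hxe : x * e = 0 := mul_rangeProj_eq_zero (by rintro _ rfl; exact hx)
  have hgpos : g * a⁺ = a⁺ := rangeProj_mul_of_mem (Set.mem_singleton _)
  have hgneg : g * a⁻ = 0 :=
    mul_eq_zero_symm_of_isSelfAdjoint (CFC.negPart_nonneg a).isSelfAdjoint hg.isSelfAdjoint
      (mul_rangeProj_eq_zero (by rintro _ rfl; exact CFC.negPart_mul_posPart a))
  refine ⟨he, hg, ?_, ?_⟩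
  · have hege : 2 * (e * g * e) * e = e := mul_rangeProj_eq_rangeProj (by
      rintro _ rfl
      exact two_mul_conjugate_mul_eq he hex hxe hgpos hgneg)
    rwa [mul_assoc, mul_assoc _ e e, he.isIdempotentElem.eq] at hege
  · have hgvg : g * (2 * e - 1) * g = 0 := mul_rangeProj_eq_zero (by
      rintro _ rfl
      rw [mul_assoc, reflection_mul_posPart he hex hxe, ← mul_assoc, hgneg, zero_mul])
    linear_combination (norm := noncomm_ring) hgvg + hg.isIdempotentElem.eq

/-- The compression `r M r` of a von Neumann algebra by a projection `r ∈ M`. It is non-unital as a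
subalgebra of the bounded operators, since its unit is `r`. -/
def cornerSubalgebra (M : VonNeumannAlgebra K) {r : K →L[ℂ] K} (hr : IsSelfAdjoint r) :
    NonUnitalStarSubalgebra ℂ (K →L[ℂ] K) where
  carrier := {x | x ∈ M ∧ r * x = x ∧ x * r = x}
  add_mem' := by
    rintro x y ⟨hx, hrx, hxr⟩ ⟨hy, hry, hyr⟩
    exact ⟨add_mem hx hy, by rw [mul_add, hrx, hry], by rw [add_mul, hxr, hyr]⟩
  zero_mem' := ⟨zero_mem M, mul_zero r, zero_mul r⟩
  mul_mem' := by
    rintro x y ⟨hx, hrx, -⟩ ⟨hy, -, hyr⟩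
    exact ⟨mul_mem hx hy, by rw [← mul_assoc, hrx], by rw [mul_assoc, hyr]⟩
  smul_mem' := by
    rintro c x ⟨hx, hrx, hxr⟩
    exact ⟨M.toStarSubalgebra.smul_mem hx c, by rw [mul_smul_comm, hrx],
      by rw [smul_mul_assoc, hxr]⟩
  star_mem' := by
    rintro x ⟨hx, hrx, hxr⟩
    exact ⟨star_mem hx, by rw [← hr.star_eq, ← star_mul, hxr],
      by rw [← hr.star_eq, ← star_mul, hrx]⟩

theorem isClosed_cornerSubalgebra (M : VonNeumannAlgebra K) {r : K →L[ℂ] K}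
    (hr : IsSelfAdjoint r) : IsClosed (cornerSubalgebra M hr : Set (K →L[ℂ] K)) := by
  have hM : IsClosed (M : Set (K →L[ℂ] K)) := by
    rw [← M.centralizer_centralizer]
    exact Set.isClosed_centralizer _
  exact hM.inter ((isClosed_eq (continuous_const_mul r) continuous_id).inter
    (isClosed_eq (continuous_mul_const r) continuous_id))

theorem exists_mul_self_eq_zero_of_not_commute {M : VonNeumannAlgebra K} {r x y : K →L[ℂ] K}
    (hr : IsStarProjection r) (hrM : r ∈ M) (hx : x ∈ M) (hy : y ∈ M)
    (hxy : ¬ Commute (r * x * r) (r * y * r)) :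
    ∃ z ∈ M, r * z = z ∧ z * r = z ∧ z * z = 0 ∧ z ≠ 0 := by
  by_contra! h
  have := isClosed_cornerSubalgebra M hr.isSelfAdjoint
  have hrr : r * r = r := hr.isIdempotentElem
  have compress_mem {z : K →L[ℂ] K} (hz : z ∈ M) :
      r * z * r ∈ cornerSubalgebra M hr.isSelfAdjoint :=
    ⟨mul_mem (mul_mem hrM hz) hrM, by rw [← mul_assoc, ← mul_assoc, hrr], by rw [mul_assoc, hrr]⟩
  refine hxy (congrArg Subtype.val (commute_of_forall_mul_self_eq_zero (fun z hz ↦ ?_)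
    (⟨_, compress_mem hx⟩ : cornerSubalgebra M hr.isSelfAdjoint) ⟨_, compress_mem hy⟩).eq)
  exact Subtype.ext (h z z.2.1 z.2.2.1 z.2.2.2 (congrArg Subtype.val hz))

end SquareZero

section Halving

variable {K : Type*} [NormedAddCommGroup K] [InnerProductSpace ℂ K] [CompleteSpace K]

theorem le_rangeProj {X : Set (K →L[ℂ] K)} {x : K →L[ℂ] K} (hx : IsStarProjection x)
    (hxX : x ∈ X) : x ≤ rangeProj X :=
  hx.le_of_mul_eq_right (isStarProjection_rangeProj X) (rangeProj_mul_of_mem hxX)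

section Directed

theorem directed_le_swap {ι α β : Type*} [LE α] [LE β] {f : ι → α} {f' : ι → β}
    (h : Directed (· ≤ ·) fun i ↦ (f i, f' i)) : Directed (· ≤ ·) fun i ↦ (f' i, f i) :=
  fun i j ↦ (h i j).imp fun _ hk ↦ ⟨hk.1.symm, hk.2.symm⟩

variable {ι : Type*} {e g : ι → K →L[ℂ] K}

theorem rangeProj_range_mul_right_of_directed (h : ∀ i, IsIsoclinicPair (e i) (g i))
    (hdir : Directed (· ≤ ·) fun i ↦ (e i, g i)) (i : ι) :
    rangeProj (Set.range e) * g i = e i * g i := by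
  have he (j : ι) : IsStarProjection (e j) := (h j).isStarProjection_left
  have hg : IsStarProjection (g i) := (h i).isStarProjection_right
  have hE : IsStarProjection (rangeProj (Set.range e)) := isStarProjection_rangeProj _
  have hmul : g i * rangeProj (Set.range e) = g i * e i * rangeProj (Set.range e) := by
    refine mul_rangeProj_congr ?_
    rintro _ ⟨j, rfl⟩
    obtain ⟨k, ⟨hei, hgi⟩, hej, -⟩ := hdir i j
    have hik : g i * e k = g i * e i := by
      simpa only [star_mul, (he _).isSelfAdjoint.star_eq, hg.isSelfAdjoint.star_eq] using
        congrArg star ((h i).left_mul_right_eq_of_le (h k) hei hgi)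
    rw [← hik, mul_assoc, ((he j).le_iff_mul_eq_right (he k)).mp hej]
  have hle : e i * rangeProj (Set.range e) = e i :=
    ((he i).le_iff_mul_eq_left hE).mp (le_rangeProj (he i) ⟨i, rfl⟩)
  rw [mul_assoc, hle] at hmul
  simpa only [star_mul, (he i).isSelfAdjoint.star_eq, hg.isSelfAdjoint.star_eq,
    hE.isSelfAdjoint.star_eq] using congrArg star hmul

theorem two_mul_rangeProj_range_of_directed (h : ∀ i, IsIsoclinicPair (e i) (g i))
    (hdir : Directed (· ≤ ·) fun i ↦ (e i, g i))
    (hdir' : Directed (· ≤ ·) fun i ↦ (g i, e i)) :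
    2 * (rangeProj (Set.range e) * rangeProj (Set.range g) * rangeProj (Set.range e)) =
      rangeProj (Set.range e) := by
  set E := rangeProj (Set.range e)
  set G := rangeProj (Set.range g)
  have hEE : E * E = E := (isStarProjection_rangeProj _).isIdempotentElem
  have hmul : 2 * (E * G * E) * E = E := by
    refine mul_rangeProj_eq_rangeProj ?_
    rintro _ ⟨i, rfl⟩
    calc 2 * (E * G * E) * e i = 2 * (E * (G * (E * e i))) := by simp only [mul_assoc]
      _ = 2 * (E * (g i * e i)) := by
        rw [rangeProj_mul_of_mem (Set.mem_range_self i),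
          rangeProj_range_mul_right_of_directed (fun i ↦ (h i).symm) hdir' i]
      _ = 2 * (e i * g i * e i) := by
        rw [← mul_assoc E, rangeProj_range_mul_right_of_directed h hdir i]
      _ = e i := (h i).two_mul_left
  rwa [mul_assoc, mul_assoc _ E E, hEE] at hmul

theorem IsIsoclinicPair.rangeProj_range_of_directed (h : ∀ i, IsIsoclinicPair (e i) (g i))
    (hdir : Directed (· ≤ ·) fun i ↦ (e i, g i)) :
    IsIsoclinicPair (rangeProj (Set.range e)) (rangeProj (Set.range g)) where
  isStarProjection_left := isStarProjection_rangeProj _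
  isStarProjection_right := isStarProjection_rangeProj _
  two_mul_left := two_mul_rangeProj_range_of_directed h hdir (directed_le_swap hdir)
  two_mul_right :=
    two_mul_rangeProj_range_of_directed (fun i ↦ (h i).symm) (directed_le_swap hdir) hdir

end Directed

/-- The compression `p M p` contains no nonzero abelian projection. For `p = 1` this says that the
von Neumann algebra `M` is continuous. -/
def IsContinuousProjection (M : VonNeumannAlgebra K) (p : K →L[ℂ] K) : Prop :=
  ∀ q ∈ M, IsStarProjection q → q ≤ p →
    (∀ x ∈ M, ∀ y ∈ M, Commute (q * x * q) (q * y * q)) → q = 0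

/-- The isoclinic pairs of projections of `M` below `p`, where `e ≤ p` is encoded as `p * e = e`. -/
def isoclinicPairsBelow (M : VonNeumannAlgebra K) (p : K →L[ℂ] K) :
    Set ((K →L[ℂ] K) × (K →L[ℂ] K)) :=
  {z | z.1 ∈ M ∧ z.2 ∈ M ∧ IsIsoclinicPair z.1 z.2 ∧ p * z.1 = z.1 ∧ p * z.2 = z.2}

variable {M : VonNeumannAlgebra K} {p q : K →L[ℂ] K}

theorem exists_mem_isoclinicPairsBelow_ne_zero (hp : IsContinuousProjection M p) (hqM : q ∈ M)
    (hq : IsStarProjection q) (hqp : q ≤ p) (hq0 : q ≠ 0) :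
    ∃ z ∈ isoclinicPairsBelow M q, z.1 ≠ 0 := by
  have hnot : ¬ ∀ x ∈ M, ∀ y ∈ M, Commute (q * x * q) (q * y * q) := fun h ↦
    hq0 (hp q hqM hq hqp h)
  push Not at hnot
  obtain ⟨x, hx, y, hy, hxy⟩ := hnot
  obtain ⟨z, hzM, hqz, hzq, hzz, hz0⟩ := exists_mul_self_eq_zero_of_not_commute hq hqM hx hy hxy
  have hqa : q * (z + star z) = z + star z := by
    rw [mul_add, hqz, ← hq.isSelfAdjoint.star_eq, ← star_mul, hzq]
  refine ⟨(rangeProj {z}, rangeProj {(z + star z)⁺}), ⟨rangeProj_mem ?_, rangeProj_mem ?_,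
    isIsoclinicPair_rangeProj hzz, mul_rangeProj_eq_rangeProj ?_, mul_rangeProj_eq_rangeProj ?_⟩,
    fun h0 ↦ hz0 ?_⟩
  · rintro _ rfl
    exact hzM
  · rintro _ rfl
    exact posPart_mem_vonNeumannAlgebra (add_mem hzM (star_mem hzM))
  · rintro _ rfl
    exact hqz
  · rintro _ rfl
    exact mul_posPart_eq_posPart (.add_star_self z) hqa
  · rw [← rangeProj_mul_of_mem (Set.mem_singleton z), show rangeProj {z} = 0 from h0, zero_mul]

theorem exists_le_of_isChain_isoclinicPairsBelow {c : Set ((K →L[ℂ] K) × (K →L[ℂ] K))}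
    (hc : c ⊆ isoclinicPairsBelow M p) (hchain : IsChain (· ≤ ·) c) :
    ∃ z ∈ isoclinicPairsBelow M p, ∀ w ∈ c, w ≤ z := by
  refine ⟨(rangeProj (Set.range fun w : c ↦ w.1.1), rangeProj (Set.range fun w : c ↦ w.1.2)),
    ⟨rangeProj_mem ?_, rangeProj_mem ?_, .rangeProj_range_of_directed (fun w ↦ (hc w.2).2.2.1)
      hchain.directed, mul_rangeProj_eq_rangeProj ?_, mul_rangeProj_eq_rangeProj ?_⟩,
    fun w hw ↦ ⟨le_rangeProj (hc hw).2.2.1.isStarProjection_left ⟨⟨w, hw⟩, rfl⟩,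
      le_rangeProj (hc hw).2.2.1.isStarProjection_right ⟨⟨w, hw⟩, rfl⟩⟩⟩
  · rintro _ ⟨w, rfl⟩
    exact (hc w.2).1
  · rintro _ ⟨w, rfl⟩
    exact (hc w.2).2.1
  · rintro _ ⟨w, rfl⟩
    exact (hc w.2).2.2.2.1
  · rintro _ ⟨w, rfl⟩
    exact (hc w.2).2.2.2.2

theorem add_mem_isoclinicPairsBelow {z w : (K →L[ℂ] K) × (K →L[ℂ] K)}
    (hp : IsStarProjection p) (hz : z ∈ isoclinicPairsBelow M p)
    (hw : w ∈ isoclinicPairsBelow M (p - isoclinicSup z.1 z.2)) :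
    z + w ∈ isoclinicPairsBelow M p := by
  obtain ⟨hz₁, hz₂, hpair, hpz₁, hpz₂⟩ := hz
  obtain ⟨hw₁, hw₂, hpair', hqw₁, hqw₂⟩ := hw
  set r := isoclinicSup z.1 z.2
  have hr : IsStarProjection r := hpair.isStarProjection_isoclinicSup
  have hpr : p * r = r := mul_isoclinicSup_of_mul_eq hpz₁ hpz₂
  have hrp : r * p = r := by
    simpa only [star_mul, hp.isSelfAdjoint.star_eq, hr.isSelfAdjoint.star_eq] using
      congrArg star hpr
  have hrq : r * (p - r) = 0 := by rw [mul_sub, hrp, hr.isIdempotentElem.eq, sub_self]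
  have hpq : p * (p - r) = p - r := by rw [mul_sub, hp.isIdempotentElem.eq, hpr]
  have hsup : r * isoclinicSup w.1 w.2 = 0 := by
    rw [← mul_isoclinicSup_of_mul_eq hqw₁ hqw₂, ← mul_assoc, hrq, zero_mul]
  refine ⟨add_mem hz₁ hw₁, add_mem hz₂ hw₂, hpair.add hpair' hsup, ?_, ?_⟩
  · rw [Prod.fst_add, mul_add, hpz₁, ← hqw₁, ← mul_assoc, hpq]
  · rw [Prod.snd_add, mul_add, hpz₂, ← hqw₂, ← mul_assoc, hpq]

theorem exists_isoclinicSup_eq (hpc : IsContinuousProjection M p) (hpM : p ∈ M)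
    (hp : IsStarProjection p) :
    ∃ z ∈ isoclinicPairsBelow M p, isoclinicSup z.1 z.2 = p := by
  obtain ⟨z, hz, hmax⟩ := zorn_le₀ (isoclinicPairsBelow M p)
    fun c hc hchain ↦ exists_le_of_isChain_isoclinicPairsBelow hc hchain
  refine ⟨z, hz, by_contra fun hne ↦ ?_⟩
  obtain ⟨hz₁, hz₂, hpair, hpz₁, hpz₂⟩ := id hz
  set r := isoclinicSup z.1 z.2
  have hr : IsStarProjection r := hpair.isStarProjection_isoclinicSup
  have hrM : r ∈ M :=
    mul_mem (ofNat_mem M 2) (mul_mem (sub_mem hz₁ hz₂) (sub_mem hz₁ hz₂))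
  have hq : IsStarProjection (p - r) :=
    hr.sub_of_mul_eq_right hp (mul_isoclinicSup_of_mul_eq hpz₁ hpz₂)
  obtain ⟨w, hw, hw0⟩ := exists_mem_isoclinicPairsBelow_ne_zero hpc (sub_mem hpM hrM) hq
    (sub_le_self p hr.nonneg) (sub_ne_zero.mpr (Ne.symm hne))
  obtain ⟨-, -, hpair', -⟩ := id hw
  have hle : z + w ≤ z := hmax (add_mem_isoclinicPairsBelow hp hz hw)
    (le_add_of_nonneg_right
      ⟨hpair'.isStarProjection_left.nonneg, hpair'.isStarProjection_right.nonneg⟩)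
  exact hw0 (le_antisymm (by simpa using hle.1) hpair'.isStarProjection_left.nonneg)

theorem exists_anticommuting_mul_self_eq (hpc : IsContinuousProjection M p) (hpM : p ∈ M)
    (hp : IsStarProjection p) :
    ∃ s ∈ M, ∃ t ∈ M, p * s = s ∧ p * t = t ∧ s * s = p ∧ t * t = p ∧ s * t + t * s = 0 := by
  obtain ⟨⟨e, g⟩, ⟨he, hg, hpair, hpe, hpg⟩, hsup⟩ := exists_isoclinicSup_eq hpc hpM hp
  have hee : e * e = e := hpair.isStarProjection_left.isIdempotentElem
  have hgg : g * g = g := hpair.isStarProjection_right.isIdempotentElem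
  have hpp : p * p = p := hp.isIdempotentElem
  have hep : e * p = e := hsup ▸ hpair.left_mul_isoclinicSup
  have hgp : g * p = g := hsup ▸ isoclinicSup_comm e g ▸ hpair.symm.left_mul_isoclinicSup
  have hp_eq : 2 * ((e - g) * (e - g)) = p := hsup
  refine ⟨2 * e - p, sub_mem (mul_mem (ofNat_mem M 2) he) hpM,
    2 * g - p, sub_mem (mul_mem (ofNat_mem M 2) hg) hpM, ?_, ?_, ?_, ?_, ?_⟩
  · linear_combination (norm := noncomm_ring) 2 * hpe - hpp
  · linear_combination (norm := noncomm_ring) 2 * hpg - hpp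
  · linear_combination (norm := noncomm_ring) 4 * hee - 2 * hep - 2 * hpe + hpp
  · linear_combination (norm := noncomm_ring) 4 * hgg - 2 * hgp - 2 * hpg + hpp
  · linear_combination (norm := noncomm_ring)
      4 * hee + 4 * hgg - 2 * hp_eq - 2 * hep - 2 * hpe - 2 * hgp - 2 * hpg + 2 * hpp

end Halving

section TripleHom

/-- A triple homomorphism into `ℂ` from a space `E` of operators. -/
def IsTripleHom {E : Submodule ℂ (H →L[ℂ] H)} (f : E →ₗ[ℂ] ℂ) : Prop :=
  ∀ (a b c : E) (h : jtri (a : H →L[ℂ] H) b c ∈ E),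
    f ⟨jtri (a : H →L[ℂ] H) b c, h⟩ = f a * (starRingEnd ℂ) (f b) * f c

theorem IsTripleHom.map_eq_mul {E : Submodule ℂ (H →L[ℂ] H)} {f : E →ₗ[ℂ] ℂ} (hf : IsTripleHom f)
    {a b c d : E}
    (h : a.1 * star b.1 * c.1 + c.1 * star b.1 * a.1 = (2 : ℂ) • d.1) :
    f d = f a * (starRingEnd ℂ) (f b) * f c := by
  have hd : jtri a.1 b.1 c.1 = d.1 := by
    rw [← inv_smul_smul₀ (two_ne_zero (α := ℂ)) d.1, ← h]
    rfl
  rw [← hf a b c (hd ▸ d.2)]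
  exact congrArg f (Subtype.ext hd.symm)

variable {M : VonNeumannAlgebra H} {p : H →L[ℂ] H}

theorem mem_corner_iff (hpM : p ∈ M) (hp : IsIdempotentElem p) {x : H →L[ℂ] H} :
    x ∈ corner M p ↔ x ∈ M ∧ p * x = x := by
  constructor
  · rintro ⟨y, hy, rfl⟩
    exact ⟨mul_mem hpM hy, (mul_assoc p p y).symm.trans (congrArg (· * y) hp.eq)⟩
  · exact fun ⟨hx, hpx⟩ ↦ ⟨x, hx, hpx⟩

theorem self_mem_corner (hpM : p ∈ M) (hp : IsIdempotentElem p) : p ∈ corner M p :=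
  (mem_corner_iff hpM hp).mpr ⟨hpM, hp⟩

variable {f : corner M p →ₗ[ℂ] ℂ}

namespace IsTripleHom

theorem eq_zero_of_map_projection_eq_zero (hf : IsTripleHom f) (hpM : p ∈ M)
    (hp : IsStarProjection p) (h0 : f ⟨p, self_mem_corner hpM hp.isIdempotentElem⟩ = 0) :
    f = 0 := by
  have hpp : p * p = p := hp.isIdempotentElem
  have mem_iff {x : H →L[ℂ] H} := mem_corner_iff (x := x) hpM hpp
  have map_eq_zero {x y : corner M p} (hxy : x.1 + x.1 * p = (2 : ℂ) • y.1) : f y = 0 := by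
    have hpx : p * x.1 = x.1 := (mem_iff.mp x.2).2
    rw [hf.map_eq_mul (a := ⟨p, self_mem_corner hpM hpp⟩) (b := ⟨p, self_mem_corner hpM hpp⟩)
      (c := x), h0, zero_mul, zero_mul]
    simpa only [hp.isSelfAdjoint.star_eq, hpp, hpx, mul_assoc] using hxy
  ext x
  obtain ⟨hxM, hpx⟩ := mem_iff.mp x.2
  let xp : corner M p :=
    ⟨x.1 * p, mem_iff.mpr ⟨mul_mem hxM hpM, by rw [← mul_assoc, hpx]⟩⟩
  have hxp : f xp = 0 := map_eq_zero (x := xp) (by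
    rw [two_smul, mul_assoc, hpp])
  have hsum : f ((2 : ℂ)⁻¹ • (x + xp)) = 0 :=
    map_eq_zero (x := x) (smul_inv_smul₀ two_ne_zero (x.1 + x.1 * p)).symm
  simpa [hxp] using hsum

theorem map_projection_eq_zero_of_anticommuting (hf : IsTripleHom f) (hpM : p ∈ M)
    (hp : IsStarProjection p) {s t : H →L[ℂ] H} (hs : s ∈ M) (ht : t ∈ M) (hps : p * s = s)
    (hpt : p * t = t) (hss : s * s = p) (htt : t * t = p) (hst : s * t + t * s = 0) :
    f ⟨p, self_mem_corner hpM hp.isIdempotentElem⟩ = 0 := by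
  let P : corner M p := ⟨p, self_mem_corner hpM hp.isIdempotentElem⟩
  let S : corner M p := ⟨s, (mem_corner_iff hpM hp.isIdempotentElem).mpr ⟨hs, hps⟩⟩
  let T : corner M p := ⟨t, (mem_corner_iff hpM hp.isIdempotentElem).mpr ⟨ht, hpt⟩⟩
  have hstar : star p = p := hp.isSelfAdjoint
  have hST : f 0 = f S * (starRingEnd ℂ) (f P) * f T := hf.map_eq_mul (by
    simpa only [S, P, T, hstar, mul_assoc, hps, hpt, ZeroMemClass.coe_zero, smul_zero] using hst)
  have hSS : f P = f S * (starRingEnd ℂ) (f P) * f S := hf.map_eq_mul (by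
    simp only [S, P, hstar, mul_assoc, hps, hss, two_smul])
  have hTT : f P = f T * (starRingEnd ℂ) (f P) * f T := hf.map_eq_mul (by
    simp only [T, P, hstar, mul_assoc, hpt, htt, two_smul])
  rw [map_zero, eq_comm, mul_eq_zero, mul_eq_zero] at hST
  rcases hST with (hS | hP) | hT
  · rwa [hS, zero_mul, zero_mul] at hSS
  · exact (map_eq_zero _).mp hP
  · rwa [hT, mul_zero] at hTT

end IsTripleHom

end TripleHom

theorem triple_hom_corner_of_continuous_eq_zero_general {M : VonNeumannAlgebra H} {p : H →L[ℂ] H}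
    (hpM : p ∈ M) (hp : IsStarProjection p) (hpc : IsContinuousProjection M p)
    {f : corner M p →ₗ[ℂ] ℂ} (hf : IsTripleHom f) : f = 0 := by
  obtain ⟨s, hs, t, ht, hps, hpt, hss, htt, hst⟩ := exists_anticommuting_mul_self_eq hpc hpM hp
  exact hf.eq_zero_of_map_projection_eq_zero hpM hp
    (hf.map_projection_eq_zero_of_anticommuting hpM hp hs ht hps hpt hss htt hst)

/-- if `M` is a continuous von Neumann algebra and `p ∈ M` is a projection,
then every triple homomorphism `pM → ℂ` is identically zero. -/
theorem triple_hom_corner_of_continuous_eq_zero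
    (M : VonNeumannAlgebra H) (hM : IsContinuousVNA M)
    (p : H →L[ℂ] H) (hp : p ∈ M) (hpProj : IsProjection p)
    (f : ↥(corner M p) →ₗ[ℂ] ℂ)
    (hf : ∀ (a b c : ↥(corner M p)) (h : jtri (a : H →L[ℂ] H) b c ∈ corner M p),
      f ⟨jtri (a : H →L[ℂ] H) b c, h⟩ = f a * (starRingEnd ℂ) (f b) * f c) :
    f = 0 :=
  triple_hom_corner_of_continuous_eq_zero_general hp ⟨hpProj.2, hpProj.1⟩
    (fun q hq hqProj _ hcomm ↦ hM q hq ⟨hqProj.2, hqProj.1⟩ hcomm) hf
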